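/- The series Σ_w 1/(‖A_w e_1‖ · ‖A_w e_2‖), summed over all words w with letters in {1,2} (only the letters 1 and 2) whose last two letters are different, diverges; equivalently, the total projective length of the arcs A_w I over all such w is infinite, where I is the projective segment between ℝe_1 and ℝe_2. -/

import Mathlib

/-!
The letters `1, 2, 3` are encoded as `0, 1, 2`. For a word `w` in `0, 1` let `(a, b)` be the
coordinate sums of `A_w e_0` and `A_w e_1`. Appending the letter `0` turns `(a, b)` into
`(a, a + b)`, appending `1` turns it into `(a + b, b)`, and the empty word has `(1, 1)`. Running the
subtractive Euclidean algorithm backwards, every coprime pair of positive integers is attained by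
such a word, and those with `b < a < 2 * b` by a word ending in `01`. Euclidean norms are at most
coordinate sums, so the series dominates the sum of `1 / (a * b)` over the latter pairs. For `b = p`
prime all `p - 1` integers between `p` and `2 * p` are admissible and together contribute at least
`1 / (4 * p)`, and the sum of the reciprocals of the primes diverges.
-/

open Matrix MeasureTheory

noncomputable section

abbrev M3 := Matrix (Fin 3) (Fin 3) ℝ
abbrev E3 := EuclideanSpace ℝ (Fin 3)

/-- The Rauzy generators. -/
def A : Fin 3 → M3
  | 0 => !![1,1,1; 0,1,0; 0,0,1]
  | 1 => !![1,0,0; 1,1,1; 0,0,1]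
  | 2 => !![1,0,0; 0,1,0; 1,1,1]

/-- Product of the matrices along a word. -/
def Aw (w : List (Fin 3)) : M3 := (w.map A).prod

/-- Euclidean norm of a vector in `ℝ³`. -/
def enorm3 (v : Fin 3 → ℝ) : ℝ := Real.sqrt (v 0 ^ 2 + v 1 ^ 2 + v 2 ^ 2)

/-- Largest singular value = `ℓ²` operator norm. -/
def sval1 (g : M3) : ℝ := ‖(Matrix.toEuclideanLin g).toContinuousLinearMap‖

/-- Smallest singular value (for invertible `g`): `σ₃(g) = σ₁(g⁻¹)⁻¹`. -/
def sval3 (g : M3) : ℝ := (sval1 g⁻¹)⁻¹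

/-- Middle singular value (for invertible `g`): `σ₂ = |det g|·σ₁(g⁻¹)/σ₁(g)`. -/
def sval2 (g : M3) : ℝ := |g.det| * sval1 g⁻¹ / sval1 g

def basis3 (i : Fin 3) : Fin 3 → ℝ := Pi.single i 1

def omega3 (v : Fin 3 → ℝ) : ℝ := v 0 + v 1 + v 2

def ofE : E3 → (Fin 3 → ℝ) := WithLp.equiv 2 (Fin 3 → ℝ)
def toE : (Fin 3 → ℝ) → E3 := (WithLp.equiv 2 (Fin 3 → ℝ)).symm

/-- The standard 2-simplex in `ℝ³` (with the Euclidean metric). -/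
def simplex : Set E3 := {x | (∀ i, 0 ≤ ofE x i) ∧ omega3 (ofE x) = 1}

/-- The projective action of the word `w` on the simplex. -/
def fmap (w : List (Fin 3)) (x : E3) : E3 :=
  toE ((omega3 ((Aw w) *ᵥ ofE x))⁻¹ • ((Aw w) *ᵥ ofE x))

/-- The Rauzy gasket. -/
def gasket : Set E3 :=
  ⋂ n : ℕ, ⋃ w ∈ {w : List (Fin 3) | w.length = n + 1}, fmap w '' simplex

/-- Falconer's singular value function. -/
def phi (s : ℝ) (g : M3) : ℝ :=
  if s ≤ 1 then (sval2 g / sval1 g) ^ s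
  else (sval2 g / sval1 g) * (sval3 g / sval1 g) ^ (s - 1)

/-- The affinity exponent of the Rauzy semigroup. -/
def sA : ℝ :=
  sSup {s : ℝ | s ∈ Set.Ioc (0:ℝ) 2 ∧
    ¬ Summable fun w : {w : List (Fin 3) // w ≠ []} => phi s (Aw w.1)}

/-- A word has its last `k` letters not all the same. -/
def LastNotAllSame (w : List (Fin 3)) (k : ℕ) : Prop :=
  k ≤ w.length ∧ ¬ ∃ c, ∀ x ∈ w.drop (w.length - k), x = c

/-- A word's last two letters are different. -/
def LastTwoDiff (w : List (Fin 3)) : Prop :=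
  ∃ u a b, w = u ++ [a, b] ∧ a ≠ b

/-- The Cartan projection `κ(g) = (log σ₁, log σ₂, log σ₃)`. -/
def kappa (g : M3) : Fin 3 → ℝ :=
  ![Real.log (sval1 g), Real.log (sval2 g), Real.log (sval3 g)]

/-- The linear functional `ψ_s` on the Cartan algebra. -/
def psi (s : ℝ) (lam : Fin 3 → ℝ) : ℝ := (lam 0 - lam 1) + (s - 1) * (lam 0 - lam 2)

end

/-- The coordinate sum of `A_w e_j`. It bounds the Euclidean norm of this vector from above and,
unlike the norm, is additive under the column operation that appending a letter to `w` performs. -/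
def columnSum (w : List (Fin 3)) (j : Fin 3) : ℝ := omega3 (Aw w *ᵥ basis3 j)

/-- The word `w` uses only the letters `0, 1`, and `A_w e_0`, `A_w e_1` have coordinate sums `a`,
`b`. Read from right to left, `w` records the steps of the subtractive Euclidean algorithm that
lead from `(a, b)` to `(1, 1)`. -/
structure IsEuclidWord (w : List (Fin 3)) (a b : ℕ) : Prop where
  ne_two : ∀ i ∈ w, i ≠ 2
  columnSum_zero : columnSum w 0 = a
  columnSum_one : columnSum w 1 = b

/-- The coprime pairs `(m, n)` with `n < m < 2 * n`, which are the pairs of column sums of the words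
in `0, 1` that end in `01`. -/
def coprimeCone : Set (ℕ × ℕ) := {x | x.1.Coprime x.2 ∧ x.2 < x.1 ∧ x.1 < 2 * x.2}

lemma omega3_add (u v : Fin 3 → ℝ) : omega3 (u + v) = omega3 u + omega3 v := by
  simp only [omega3, Pi.add_apply]
  ring

lemma enorm3_le_omega3 {v : Fin 3 → ℝ} (hv : ∀ i, 0 ≤ v i) : enorm3 v ≤ omega3 v := by
  simpa only [enorm3, omega3, Fin.sum_univ_three] using
    Real.sqrt_le_iff.2 ⟨Finset.sum_nonneg fun i _ => hv i,
      Finset.sum_sq_le_sq_sum_of_nonneg (s := Finset.univ) fun i _ => hv i⟩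

lemma enorm3_eq_norm (v : Fin 3 → ℝ) : enorm3 v = ‖toE v‖ := by
  simp [enorm3, toE, EuclideanSpace.norm_eq, Fin.sum_univ_three]

lemma enorm3_pos {v : Fin 3 → ℝ} (hv : v ≠ 0) : 0 < enorm3 v := by
  simpa [enorm3_eq_norm, toE] using hv

lemma A_nonneg (k i j : Fin 3) : 0 ≤ A k i j := by
  fin_cases k <;> fin_cases i <;> fin_cases j <;> simp [A]

lemma A_mulVec_basis3_self (i : Fin 3) : A i *ᵥ basis3 i = basis3 i := by
  ext k
  fin_cases i <;> fin_cases k <;> simp [A, basis3]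

lemma A_mulVec_basis3_of_ne {i j : Fin 3} (hij : i ≠ j) :
    A i *ᵥ basis3 j = basis3 i + basis3 j := by
  ext k
  fin_cases i <;> fin_cases j <;> fin_cases k <;> simp [A, basis3] at hij ⊢

lemma Aw_nonneg (w : List (Fin 3)) (i j : Fin 3) : 0 ≤ Aw w i j := by
  induction w generalizing i with
  | nil => simp [Aw, Matrix.one_apply, apply_ite]
  | cons k w ih =>
    rw [Aw, List.map_cons, List.prod_cons, Matrix.mul_apply]
    exact Finset.sum_nonneg fun l _ => mul_nonneg (A_nonneg k i l) (ih l)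

lemma Aw_concat_mulVec (w : List (Fin 3)) (i : Fin 3) (v : Fin 3 → ℝ) :
    Aw (w ++ [i]) *ᵥ v = Aw w *ᵥ (A i *ᵥ v) := by
  simp [Aw]

lemma columnSum_nil (j : Fin 3) : columnSum [] j = 1 := by
  fin_cases j <;> simp [columnSum, Aw, basis3, omega3]

lemma columnSum_concat_self (w : List (Fin 3)) (i : Fin 3) :
    columnSum (w ++ [i]) i = columnSum w i := by
  rw [columnSum, Aw_concat_mulVec, A_mulVec_basis3_self, columnSum]

lemma columnSum_concat_of_ne (w : List (Fin 3)) {i j : Fin 3} (hij : i ≠ j) :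
    columnSum (w ++ [i]) j = columnSum w i + columnSum w j := by
  rw [columnSum, Aw_concat_mulVec, A_mulVec_basis3_of_ne hij, Matrix.mulVec_add, omega3_add,
    columnSum, columnSum]

lemma columnSum_pos (w : List (Fin 3)) (j : Fin 3) : 0 < columnSum w j := by
  induction w using List.reverseRecOn generalizing j with
  | nil => simp only [columnSum_nil, zero_lt_one]
  | append_singleton w i ih =>
    obtain rfl | hij := eq_or_ne i j
    · simpa only [columnSum_concat_self] using ih i
    · simpa only [columnSum_concat_of_ne w hij] using add_pos (ih i) (ih j)

lemma enorm3_column_le_columnSum (w : List (Fin 3)) (j : Fin 3) :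
    enorm3 (Aw w *ᵥ basis3 j) ≤ columnSum w j :=
  enorm3_le_omega3 fun i => by
    simpa only [basis3, Matrix.mulVec_single_one, Matrix.col_apply] using Aw_nonneg w i j

lemma enorm3_column_pos (w : List (Fin 3)) (j : Fin 3) : 0 < enorm3 (Aw w *ᵥ basis3 j) := by
  refine enorm3_pos fun h => (columnSum_pos w j).ne' ?_
  simp [columnSum, h, omega3]

lemma one_div_columnSum_mul_le (w : List (Fin 3)) (i j : Fin 3) :
    1 / (columnSum w i * columnSum w j) ≤
      1 / (enorm3 (Aw w *ᵥ basis3 i) * enorm3 (Aw w *ᵥ basis3 j)) :=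
  one_div_le_one_div_of_le (mul_pos (enorm3_column_pos w i) (enorm3_column_pos w j))
    (mul_le_mul (enorm3_column_le_columnSum w i) (enorm3_column_le_columnSum w j)
      (enorm3_column_pos w j).le (columnSum_pos w i).le)

namespace IsEuclidWord

variable {w : List (Fin 3)} {a b : ℕ}

lemma nil : IsEuclidWord [] 1 1 where
  ne_two := by simp
  columnSum_zero := by simp [columnSum_nil]
  columnSum_one := by simp [columnSum_nil]

lemma concat_zero (h : IsEuclidWord w a b) : IsEuclidWord (w ++ [0]) a (a + b) where
  ne_two := by simpa [or_imp, forall_and] using h.ne_two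
  columnSum_zero := by rw [columnSum_concat_self, h.columnSum_zero]
  columnSum_one := by
    rw [columnSum_concat_of_ne w zero_ne_one, h.columnSum_zero, h.columnSum_one, Nat.cast_add]

lemma concat_one (h : IsEuclidWord w a b) : IsEuclidWord (w ++ [1]) (a + b) b where
  ne_two := by simpa [or_imp, forall_and] using h.ne_two
  columnSum_zero := by
    rw [columnSum_concat_of_ne w one_ne_zero, h.columnSum_zero, h.columnSum_one, Nat.cast_add,
      add_comm]
  columnSum_one := by rw [columnSum_concat_self, h.columnSum_one]

end IsEuclidWord

theorem exists_isEuclidWord {a b : ℕ} (ha : 0 < a) (hb : 0 < b) (hab : a.Coprime b) :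
    ∃ w, IsEuclidWord w a b := by
  obtain hlt | rfl | hgt := lt_trichotomy a b
  · obtain ⟨w, hw⟩ := exists_isEuclidWord ha (Nat.sub_pos_of_lt hlt)
      ((Nat.coprime_sub_self_right hlt.le).2 hab)
    exact ⟨w ++ [0], by simpa only [Nat.add_sub_cancel' hlt.le] using hw.concat_zero⟩
  · obtain rfl : a = 1 := (Nat.coprime_self a).1 hab
    exact ⟨[], .nil⟩
  · obtain ⟨w, hw⟩ := exists_isEuclidWord (Nat.sub_pos_of_lt hgt) hb
      ((Nat.coprime_sub_self_left hgt.le).2 hab)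
    exact ⟨w ++ [1], by simpa only [Nat.sub_add_cancel hgt.le] using hw.concat_one⟩
termination_by a + b

lemma exists_isEuclidWord_lastTwoDiff {x : ℕ × ℕ} (hx : x ∈ coprimeCone) :
    ∃ w, LastTwoDiff w ∧ IsEuclidWord w x.1 x.2 := by
  obtain ⟨m, n⟩ := x
  obtain ⟨hmn, hlt, hlt_two⟩ : m.Coprime n ∧ n < m ∧ m < 2 * n := hx
  obtain ⟨a, rfl⟩ := Nat.exists_eq_add_of_le' hlt.le
  obtain ⟨b, rfl⟩ := Nat.exists_eq_add_of_le (show a ≤ n by omega)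
  have hab : a.Coprime b := by simpa using hmn
  obtain ⟨u, hu⟩ := exists_isEuclidWord (by omega) (by omega) hab
  exact ⟨u ++ [0, 1], ⟨u, 0, 1, rfl, zero_ne_one⟩, by simpa using hu.concat_zero.concat_one⟩

lemma one_div_four_mul_le_sum_Ioo {n : ℕ} (hn : 2 ≤ n) :
    1 / (4 * n : ℝ) ≤ ∑ m ∈ Finset.Ioo n (2 * n), 1 / (m * n : ℝ) := by
  have hn' : (2 : ℝ) ≤ n := mod_cast hn
  have hterm : ∀ m ∈ Finset.Ioo n (2 * n), 1 / (2 * n * n : ℝ) ≤ 1 / (m * n : ℝ) := by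
    intro m hm
    obtain ⟨hnm, hm⟩ := Finset.mem_Ioo.1 hm
    have hm_pos : (0 : ℝ) < m := mod_cast (Nat.zero_le n).trans_lt hnm
    have hm_le : (m : ℝ) ≤ 2 * n := mod_cast hm.le
    gcongr
  have hcard : ((Finset.Ioo n (2 * n)).card : ℝ) = n - 1 := by
    rw [Nat.card_Ioo, ← Nat.cast_pred (by omega)]
    congr 1
    omega
  calc 1 / (4 * n : ℝ) = n / 2 * (1 / (2 * n * n)) := by field_simp; norm_num
    _ ≤ (n - 1) * (1 / (2 * n * n)) := by gcongr; linarith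
    _ ≤ ∑ m ∈ Finset.Ioo n (2 * n), 1 / (m * n : ℝ) := by
      simpa only [nsmul_eq_mul, hcard] using Finset.card_nsmul_le_sum _ _ _ hterm

lemma mk_prime_mem_coprimeCone {p m : ℕ} (hp : p.Prime) (hm : m ∈ Finset.Ioo p (2 * p)) :
    (m, p) ∈ coprimeCone := by
  obtain ⟨hpm, hm⟩ := Finset.mem_Ioo.1 hm
  have hndvd : ¬ p ∣ m := Nat.not_dvd_of_lt_of_lt_mul_succ (k := 1) (by omega) (by omega)
  exact ⟨((hp.coprime_iff_not_dvd).2 hndvd).symm, hpm, hm⟩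

theorem not_summable_one_div_mul_coprimeCone :
    ¬ Summable fun x : coprimeCone => 1 / (x.1.1 * x.1.2 : ℝ) := by
  intro hsum
  let toCone (y : Σ p : Nat.Primes, Finset.Ioo (p : ℕ) (2 * p)) : coprimeCone :=
    ⟨(y.2, y.1), mk_prime_mem_coprimeCone y.1.2 y.2.2⟩
  have toCone_injective : Function.Injective toCone := by
    rintro ⟨⟨p, hp⟩, m, hm⟩ ⟨⟨q, hq⟩, n, hn⟩ h
    obtain ⟨rfl, rfl⟩ : m = n ∧ p = q := by simpa [toCone] using h
    rfl
  have hfiber : Summable fun p : Nat.Primes =>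
      ∑ m ∈ Finset.Ioo (p : ℕ) (2 * p), 1 / (m * p : ℝ) := by
    refine (hsum.comp_injective toCone_injective).sigma.congr fun p => ?_
    rw [tsum_fintype]
    exact Finset.sum_coe_sort (Finset.Ioo (p : ℕ) (2 * p)) fun m => 1 / (m * p : ℝ)
  have hfour : Summable fun p : Nat.Primes => 1 / (4 * p : ℝ) :=
    .of_nonneg_of_le (fun p => by positivity) (fun p => one_div_four_mul_le_sum_Ioo p.2.two_le)
      hfiber
  refine Nat.Primes.not_summable_one_div ((hfour.mul_left 4).congr fun p => ?_)
  field_simp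

/-- The total projective length of the arcs `A_w I`, over words in the letters `1,2`
whose last two letters differ, is infinite. -/
theorem total_arc_length_diverges :
    ¬ Summable (fun w : {w : List (Fin 3) // (∀ i ∈ w, i ≠ 2) ∧ LastTwoDiff w} =>
      1 / (enorm3 (Aw w.1 *ᵥ basis3 0) * enorm3 (Aw w.1 *ᵥ basis3 1))) := by
  intro hsum
  choose W hW_diff hW using fun x : coprimeCone => exists_isEuclidWord_lastTwoDiff x.2
  have W_injective : Function.Injective W := by
    intro x y hxy
    have h_fst := (hW x).columnSum_zero.symm.trans (hxy ▸ (hW y).columnSum_zero)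
    have h_snd := (hW x).columnSum_one.symm.trans (hxy ▸ (hW y).columnSum_one)
    exact Subtype.ext (Prod.ext (mod_cast h_fst) (mod_cast h_snd))
  have hsum_W := hsum.comp_injective
    (i := fun x => ⟨W x, (hW x).ne_two, hW_diff x⟩)
    fun x y hxy => W_injective (congrArg Subtype.val hxy)
  refine not_summable_one_div_mul_coprimeCone
    (.of_nonneg_of_le (fun x => by positivity) (fun x => ?_) hsum_W)
  simpa only [Function.comp_apply, (hW x).columnSum_zero, (hW x).columnSum_one]
    using one_div_columnSum_mul_le (W x) 0 1
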